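/- Let 1 ≤ p < ∞ and 0 < s < 1. There is a constant W_{N,p} > 0 such that for every ball B_r(x_0) and every u ∈ C^∞_0(R^N), ‖u − av(u; B_r(x_0))‖^p_{L^p(B_r(x_0))} ≤ W_{N,p} · s(1−s) · r^{sp} · ∬_{B_r(x_0)×R^N} |u(x)−u(y)|^p/|x−y|^{N+sp} dx dy. -/

import Mathlib

open MeasureTheory Metric Filter
open scoped ENNReal

noncomputable section

abbrev Euc (N : ℕ) := EuclideanSpace ℝ (Fin N)

/-- The (p-th power of the) Gagliardo–Slobodeckii seminorm on `ℝ^N`. -/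
def gag (N : ℕ) (p s : ℝ) (u : Euc N → ℝ) : ℝ :=
  ∫ z : Euc N × Euc N, |u z.1 - u z.2| ^ p / ‖z.1 - z.2‖ ^ ((N : ℝ) + s * p)

/-- `u ∈ C^∞_0(Ω)`: smooth with compact support contained in `Ω`. -/
def TestOn {N : ℕ} (Ω : Set (Euc N)) (u : Euc N → ℝ) : Prop :=
  ContDiff ℝ (⊤ : ℕ∞) u ∧ HasCompactSupport u ∧ tsupport u ⊆ Ω

/-- The fractional principal frequency `λ^s_{p,q}(Ω)`. -/
def lam (N : ℕ) (p q s : ℝ) (Ω : Set (Euc N)) : ℝ :=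
  sInf { c | ∃ u : Euc N → ℝ, TestOn Ω u ∧ (∫ x in Ω, |u x| ^ q) = 1 ∧ c = gag N p s u }

/-- The homogeneous relative `(s,p)`-capacity of `A` in `E`. -/
def fcap (N : ℕ) (p s : ℝ) (A E : Set (Euc N)) : ℝ :=
  sInf { c | ∃ φ : Euc N → ℝ, TestOn E φ ∧ (∀ x ∈ A, 1 ≤ φ x) ∧ c = gag N p s φ }

/-- The fractional `s`-perimeter of a set `A ⊆ ℝ^N`. -/
def sPer (N : ℕ) (s : ℝ) (A : Set (Euc N)) : ℝ :=
  ∫ z : Euc N × Euc N,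
    |A.indicator (fun _ => (1 : ℝ)) z.1 - A.indicator (fun _ => (1 : ℝ)) z.2| /
      ‖z.1 - z.2‖ ^ ((N : ℝ) + s)

/-- An open set with smooth boundary, described as a regular sublevel set of a smooth function. -/
def SmoothBdry {N : ℕ} (O : Set (Euc N)) : Prop :=
  ∃ f : Euc N → ℝ, ContDiff ℝ (⊤ : ℕ∞) f ∧ O = {x | f x < 0} ∧ ∀ x, f x = 0 → fderiv ℝ f x ≠ 0

/-- The sharp constant in the fractional Sobolev inequality. -/
def sobConst (N : ℕ) (p s : ℝ) : ℝ :=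
  sSup {c | ∃ u : Euc N → ℝ, TestOn Set.univ u ∧ gag N p s u = 1 ∧
    c = (∫ x, |u x| ^ ((N : ℝ) * p / (N - s * p))) ^ (((N : ℝ) - s * p) / N)}

/-- Membership in `W̃^{s,p}_0(Ω)`, the closure of `C^∞_0(Ω)` in `W^{s,p}(ℝ^N)`. -/
def MemW0 (N : ℕ) (p s : ℝ) (Ω : Set (Euc N)) (V : Euc N → ℝ) : Prop :=
  ∃ u : ℕ → Euc N → ℝ, (∀ n, TestOn Ω (u n)) ∧
    Filter.Tendsto (fun n => (∫ x, |u n x - V x| ^ p) + gag N p s (fun x => u n x - V x))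
      Filter.atTop (nhds 0)

/-- The relative (local) `p`-capacity of `A` in `E`. -/
def pcap (N : ℕ) (p : ℝ) (A E : Set (Euc N)) : ℝ :=
  sInf { c | ∃ φ : Euc N → ℝ, TestOn E φ ∧ (∀ x ∈ A, 1 ≤ φ x) ∧
    c = ∫ x in E, ‖fderiv ℝ φ x‖ ^ p }

/-- The sharp constant in the local `p`-Poincaré inequality on `E`. -/
def lamLoc (N : ℕ) (p : ℝ) (E : Set (Euc N)) : ℝ :=
  sInf { c | ∃ u : Euc N → ℝ, TestOn E u ∧ (∫ x in E, |u x| ^ p) = 1 ∧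
    c = ∫ x in E, ‖fderiv ℝ u x‖ ^ p }

/-- The compact set `A ⊆ closure (B_r(x0))` is `(s,p,γ)`-negligible. -/
def Negligible (N : ℕ) (p s γ : ℝ) (x0 : Euc N) (r : ℝ) (A : Set (Euc N)) : Prop :=
  fcap N p s A (ball x0 (2 * r)) ≤ γ * fcap N p s (closedBall x0 r) (ball x0 (2 * r))

/-- The fractional `(p,γ)`-capacitary inradius of order `s` of `Ω` (valued in `ℝ≥0∞`). -/
def capInr (N : ℕ) (p s γ : ℝ) (Ω : Set (Euc N)) : ℝ≥0∞ :=
  sSup {R | ∃ r : ℝ, 0 < r ∧ R = ENNReal.ofReal r ∧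
    ∃ x0 : Euc N, Negligible N p s γ x0 r (closedBall x0 r \ Ω)}

end

/-!
Write `D` for the integral of `|u x - u y| ^ p` over pairs of points of the ball `B`. By Jensen's
inequality the left-hand side is at most `D / |B|`, and the factor `min s (1 - s)`, comparable to
`s (1 - s)`, comes from estimating `D` in two ways.

* For small `s`: compare `u x` and `u z` through a third point `y` outside `B`, averaged against
  the weight `|y - x₀| ^ (-(N + s p))`. The mass of this weight is of order `1 / s`, whereas the
  averaged differences are controlled by the Gagliardo energy over `B × Bᶜ`.
* For `s` close to `1`: let `D ρ` be the part of `D` from pairs at distance less than `ρ`.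
  Splitting increments at midpoints gives `D ρ ≤ 2 ^ (N + p) * D (ρ / 2)`, so each of the dyadic
  terms `2 ^ (k (N + s p)) * D (ρ / 2 ^ k)` is at least `2 ^ (-k p (1 - s)) * D ρ`. Their sum is
  bounded by the Gagliardo energy over `B × B`, while the geometric series is at least
  `1 / (p (1 - s))`.
-/

section ENNRealSums

lemma sum_range_succ_pow_le_two_mul_pow {q : ℝ≥0∞} (hq : 2 ≤ q) (n : ℕ) :
    ∑ k ∈ Finset.range (n + 1), q ^ k ≤ 2 * q ^ n := by
  induction n with
  | zero => simp
  | succ n ih =>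
    calc ∑ k ∈ Finset.range (n + 2), q ^ k
        = ∑ k ∈ Finset.range (n + 1), q ^ k + q ^ (n + 1) := Finset.sum_range_succ _ _
      _ ≤ q * q ^ n + q ^ (n + 1) := by grw [ih, hq]
      _ = 2 * q ^ (n + 1) := by ring

lemma tsum_indicator_pow_le_two_mul {q M : ℝ≥0∞} (hq : 2 ≤ q) {S : Set ℕ}
    (hS : ∀ k ∈ S, q ^ k ≤ M) : ∑' k, S.indicator (q ^ ·) k ≤ 2 * M := by
  refine ENNReal.tsum_le_of_sum_range_le fun n ↦ ?_
  induction n with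
  | zero => simp
  | succ n ih =>
    by_cases hn : n ∈ S
    · calc ∑ k ∈ Finset.range (n + 1), S.indicator (q ^ ·) k
          ≤ ∑ k ∈ Finset.range (n + 1), q ^ k := by
            gcongr with k
            exact Set.indicator_le_self S _ k
        _ ≤ 2 * q ^ n := sum_range_succ_pow_le_two_mul_pow hq n
        _ ≤ 2 * M := by grw [hS n hn]
    · simpa [Finset.sum_range_succ, hn] using ih

lemma one_sub_two_rpow_neg_le (t : ℝ) : 1 - (2 : ℝ≥0∞) ^ (-t) ≤ ENNReal.ofReal t := by
  have hreal : 1 - (2 : ℝ) ^ (-t) ≤ max t 0 := by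
    rcases le_total t 0 with ht | ht
    · have := Real.one_le_rpow one_le_two (neg_nonneg.2 ht)
      exact (sub_nonpos.2 this).trans (le_max_right _ _)
    · rw [Real.rpow_def_of_pos two_pos]
      have := Real.add_one_le_exp (Real.log 2 * -t)
      exact le_max_of_le_left (by nlinarith [Real.log_two_lt_d9])
  calc 1 - (2 : ℝ≥0∞) ^ (-t) = ENNReal.ofReal (1 - 2 ^ (-t)) := by
        rw [ENNReal.ofReal_sub _ (by positivity), ← ENNReal.ofReal_rpow_of_pos two_pos]
        simp
    _ ≤ ENNReal.ofReal (max t 0) := ENNReal.ofReal_le_ofReal hreal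
    _ = ENNReal.ofReal t := by simp [ENNReal.ofReal_max]

end ENNRealSums

section Jensen

variable {α F : Type*} {mα : MeasurableSpace α} [NormedAddCommGroup F] [NormedSpace ℝ F]
  {ν : Measure α} [IsFiniteMeasure ν] {p : ℝ}

lemma laverage_rpow_le (hp : 1 ≤ p) {f : α → ℝ≥0∞} (hf : AEMeasurable f ν) :
    (⨍⁻ x, f x ∂ν) ^ p ≤ ⨍⁻ x, f x ^ p ∂ν := by
  have hp0 : 0 < p := one_pos.trans_le hp
  rcases eq_zero_or_neZero ν with rfl | _
  · simp [hp0]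
  have h := eLpNorm'_le_eLpNorm'_of_exponent_le one_pos hp ((ν Set.univ)⁻¹ • ν)
    (hf.smul_measure _).aestronglyMeasurable
  simp only [eLpNorm', enorm_eq_self, ENNReal.rpow_one, one_div, inv_one] at h
  simpa [laverage_eq', hp0.ne', ← ENNReal.rpow_mul] using ENNReal.rpow_le_rpow h hp0.le

variable [CompleteSpace F] {f : α → F}

lemma edist_average_le_laverage_edist [NeZero ν] (hf : Integrable f ν) (c : F) :
    edist c (⨍ y, f y ∂ν) ≤ ⨍⁻ y, edist c (f y) ∂ν := by
  have hf' : Integrable f ((ν Set.univ)⁻¹ • ν) := hf.smul_measure (by simp [NeZero.ne ν])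
  have hc : c - ⨍ y, f y ∂ν = ∫ y, (c - f y) ∂((ν Set.univ)⁻¹ • ν) := by
    rw [integral_sub (integrable_const c) hf']
    simp [average]
  simp only [edist_eq_enorm_sub]
  rw [hc]
  exact enorm_integral_le_lintegral_enorm _

lemma measure_univ_mul_lintegral_edist_average_rpow_le (hp : 1 ≤ p) (hf : Integrable f ν) :
    ν Set.univ * ∫⁻ x, edist (f x) (⨍ y, f y ∂ν) ^ p ∂ν ≤
      ∫⁻ x, ∫⁻ y, edist (f x) (f y) ^ p ∂ν ∂ν := by
  rcases eq_zero_or_neZero ν with rfl | _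
  · simp
  rw [← lintegral_const_mul' _ _ (measure_ne_top ν _)]
  refine lintegral_mono fun x ↦ ?_
  calc ν Set.univ * edist (f x) (⨍ y, f y ∂ν) ^ p
      ≤ ν Set.univ * (⨍⁻ y, edist (f x) (f y) ∂ν) ^ p := by
        grw [edist_average_le_laverage_edist hf]
    _ ≤ ν Set.univ * ⨍⁻ y, edist (f x) (f y) ^ p ∂ν := by
        grw [laverage_rpow_le hp (aestronglyMeasurable_const.edist hf.1)]
    _ = ∫⁻ y, edist (f x) (f y) ^ p ∂ν := measure_mul_laverage _ _

end Jensen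

section Gagliardo

variable {X Y : Type*} [PseudoEMetricSpace X] [PseudoEMetricSpace Y] {p a : ℝ} {u : X → Y}

lemma edist_rpow_le_two_rpow_mul_add (hp : 1 ≤ p) (x y z : X) :
    edist x z ^ p ≤ 2 ^ (p - 1) * (edist x y ^ p + edist z y ^ p) := by
  grw [edist_triangle_right x z y, ENNReal.rpow_add_le_mul_rpow_add_rpow _ _ hp]

/-- The integrand of the Gagliardo energy; the exponent `a` is `N + s p` in the usual notation.
On the diagonal it is `0 / 0 = 0` when `p` and `a` are positive. -/
noncomputable def gagliardoKernel (p a : ℝ) (u : X → Y) (x y : X) : ℝ≥0∞ :=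
  edist (u x) (u y) ^ p / edist x y ^ a

lemma tsum_pow_mul_indicator_edist_lt_le (ha : 1 ≤ a) {ρ : ℝ≥0∞} (hρ : ρ ≠ ⊤) (z : X × X) :
    ∑' k, (2 ^ a) ^ k * {z : X × X | edist z.1 z.2 < ρ / 2 ^ k}.indicator
        (fun z ↦ edist (u z.1) (u z.2) ^ p) z ≤
      2 * ρ ^ a * gagliardoKernel p a u z.1 z.2 := by
  set S : Set ℕ := {k | edist z.1 z.2 < ρ / 2 ^ k}
  have htwo : (2 : ℝ≥0∞) ≤ 2 ^ a := by
    simpa using ENNReal.rpow_le_rpow_of_exponent_le one_le_two ha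
  have hS : ∀ k ∈ S, ((2 : ℝ≥0∞) ^ a) ^ k ≤ (ρ / edist z.1 z.2) ^ a := by
    intro k (hk : edist z.1 z.2 < ρ / 2 ^ k)
    have hρ0 : ρ ≠ 0 := by rintro rfl; simp at hk
    rw [← ENNReal.rpow_mul_natCast, mul_comm, ENNReal.rpow_natCast_mul]
    gcongr
    rw [ENNReal.le_div_iff_mul_le (.inr hρ0) (.inr hρ), mul_comm]
    exact ENNReal.mul_le_of_le_div hk.le
  calc ∑' k, (2 ^ a) ^ k * {z : X × X | edist z.1 z.2 < ρ / 2 ^ k}.indicator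
          (fun z ↦ edist (u z.1) (u z.2) ^ p) z
      = (∑' k, S.indicator ((2 ^ a) ^ ·) k) * edist (u z.1) (u z.2) ^ p := by
        rw [← ENNReal.tsum_mul_right]
        refine tsum_congr fun k ↦ ?_
        by_cases hk : edist z.1 z.2 < ρ / 2 ^ k <;> simp [S, hk]
    _ ≤ 2 * (ρ / edist z.1 z.2) ^ a * edist (u z.1) (u z.2) ^ p := by
        grw [tsum_indicator_pow_le_two_mul htwo hS]
    _ = 2 * ρ ^ a * gagliardoKernel p a u z.1 z.2 := by
        rw [ENNReal.div_rpow_of_nonneg _ _ (by positivity), gagliardoKernel]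
        simp only [div_eq_mul_inv]
        ring

lemma measurable_edist_comp_rpow {α : Type*} [MeasurableSpace α] {f : α → Y}
    (hf : StronglyMeasurable f) (p : ℝ) :
    Measurable fun z : α × α ↦ edist (f z.1) (f z.2) ^ p :=
  ((hf.comp_measurable measurable_fst).edist
    (hf.comp_measurable measurable_snd)).measurable.pow_const p

variable [MeasurableSpace X]

/-- The `L^p` energy of the increments of `u` over the pairs of points of `B` at distance
less than `ρ`. It is the quantity whose scaling in `ρ` controls the Gagliardo energy. -/
noncomputable def nearIncrementEnergy (μ : Measure X) (p : ℝ) (u : X → Y) (B : Set X)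
    (ρ : ℝ≥0∞) : ℝ≥0∞ :=
  ∫⁻ z in {z | edist z.1 z.2 < ρ} ∩ B ×ˢ B, edist (u z.1) (u z.2) ^ p ∂μ.prod μ

/-- The Gagliardo energy of `u` over `A × B`, with kernel exponent `a` (`N + s p` in the usual
notation). -/
noncomputable def gagliardoEnergy (μ : Measure X) (p a : ℝ) (u : X → Y) (A B : Set X) : ℝ≥0∞ :=
  ∫⁻ x in A, ∫⁻ y in B, gagliardoKernel p a u x y ∂μ ∂μ

lemma gagliardoEnergy_congr_ae {μ : Measure X} {v : X → Y} (huv : u =ᵐ[μ] v) {A B : Set X} :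
    gagliardoEnergy μ p a u A B = gagliardoEnergy μ p a v A B := by
  refine lintegral_congr_ae (ae_restrict_of_ae ?_)
  filter_upwards [huv] with x hx
  refine lintegral_congr_ae (ae_restrict_of_ae ?_)
  filter_upwards [huv] with y hy
  simp only [gagliardoKernel, hx, hy]

@[gcongr]
lemma gagliardoEnergy_mono_right {μ : Measure X} {A B B' : Set X} (hB : B ⊆ B') :
    gagliardoEnergy μ p a u A B ≤ gagliardoEnergy μ p a u A B' :=
  lintegral_mono fun _ ↦ lintegral_mono_set hB

variable [OpensMeasurableSpace X] [SecondCountableTopology X]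

lemma measurableSet_edist_lt (ρ : ℝ≥0∞) : MeasurableSet {z : X × X | edist z.1 z.2 < ρ} :=
  measurableSet_lt measurable_edist measurable_const

lemma measurable_gagliardoKernel (hu : StronglyMeasurable u) :
    Measurable fun z : X × X ↦ gagliardoKernel p a u z.1 z.2 :=
  (measurable_edist_comp_rpow hu p).div (measurable_edist.pow_const a)

lemma tsum_pow_mul_nearIncrementEnergy_le (ha : 1 ≤ a) (hu : StronglyMeasurable u)
    {μ : Measure X} [SFinite μ] {B : Set X} {ρ : ℝ≥0∞} (hρ : ρ ≠ ⊤) :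
    ∑' k, (2 ^ a) ^ k * nearIncrementEnergy μ p u B (ρ / 2 ^ k) ≤
      2 * ρ ^ a * gagliardoEnergy μ p a u B B := by
  have hmeas (k : ℕ) : Measurable ({z : X × X | edist z.1 z.2 < ρ / 2 ^ k}.indicator
      fun z ↦ edist (u z.1) (u z.2) ^ p) :=
    (measurable_edist_comp_rpow hu p).indicator (measurableSet_edist_lt _)
  calc ∑' k, (2 ^ a) ^ k * nearIncrementEnergy μ p u B (ρ / 2 ^ k)
      = ∫⁻ z in B ×ˢ B, ∑' k, (2 ^ a) ^ k * {z : X × X | edist z.1 z.2 < ρ / 2 ^ k}.indicator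
          (fun z ↦ edist (u z.1) (u z.2) ^ p) z ∂μ.prod μ := by
        rw [lintegral_tsum fun k ↦ ((hmeas k).const_mul _).aemeasurable]
        refine tsum_congr fun k ↦ ?_
        rw [lintegral_const_mul _ (hmeas k), setLIntegral_indicator (measurableSet_edist_lt _),
          nearIncrementEnergy]
    _ ≤ ∫⁻ z in B ×ˢ B, 2 * ρ ^ a * gagliardoKernel p a u z.1 z.2 ∂μ.prod μ := by
        gcongr with z
        exact tsum_pow_mul_indicator_edist_lt_le ha hρ z
    _ = 2 * ρ ^ a * gagliardoEnergy μ p a u B B := by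
        rw [lintegral_const_mul _ (measurable_gagliardoKernel hu), gagliardoEnergy,
          setLIntegral_prod _ (measurable_gagliardoKernel hu).aemeasurable]

end Gagliardo

lemma edist_left_midpoint_eq_div_two {E : Type*} [SeminormedAddCommGroup E] [NormedSpace ℝ E]
    (x y : E) : edist x (midpoint ℝ x y) = edist x y / 2 := by
  simp only [edist_nndist, nndist_left_midpoint, ENNReal.coe_mul]
  simp [mul_comm, div_eq_mul_inv]

section Midpoint

variable {E F : Type*} [NormedAddCommGroup E] [NormedSpace ℝ E] [FiniteDimensional ℝ E]
  [MeasurableSpace E] [BorelSpace E] {μ : Measure E} [μ.IsAddHaarMeasure]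
  [PseudoEMetricSpace F] {u : E → F} {p a r : ℝ} {B : Set E}

@[fun_prop]
lemma measurable_midpoint {α : Type*} [MeasurableSpace α] {f g : α → E} (hf : Measurable f)
    (hg : Measurable g) : Measurable fun a ↦ midpoint ℝ (f a) (g a) := by
  simp only [midpoint_eq_smul_add]
  fun_prop

lemma lintegral_prod_midpoint {f : E × E → ℝ≥0∞} (hf : Measurable f) :
    ∫⁻ z, f (z.1, midpoint ℝ z.1 z.2) ∂μ.prod μ =
      2 ^ Module.finrank ℝ E * ∫⁻ z, f z ∂μ.prod μ := by
  have hhalf (g : E → ℝ≥0∞) (hg : Measurable g) (x : E) :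
      ∫⁻ y, g (midpoint ℝ x y) ∂μ = 2 ^ Module.finrank ℝ E * ∫⁻ y, g y ∂μ := by
    simp only [midpoint_eq_smul_add]
    rw [lintegral_add_left_eq_self (fun y ↦ g ((⅟2 : ℝ) • y)) x,
      ← lintegral_map hg (measurable_const_smul (⅟2 : ℝ)),
      Measure.map_addHaar_smul μ (by simp), lintegral_smul_measure]
    simp [abs_of_pos, ENNReal.ofReal_pow]
  rw [lintegral_prod _ (by fun_prop), lintegral_prod _ hf.aemeasurable,
    ← lintegral_const_mul _ hf.lintegral_prod_right']
  exact lintegral_congr fun x ↦ hhalf _ (hf.comp measurable_prodMk_left) x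

lemma setLIntegral_edist_rpow_le_of_midpoint_mem (hp : 1 ≤ p) (hu : StronglyMeasurable u)
    {S T : Set (E × E)} (hT : MeasurableSet T)
    (hST : ∀ z ∈ S, (z.1, midpoint ℝ z.1 z.2) ∈ T ∧ (z.2, midpoint ℝ z.1 z.2) ∈ T) :
    ∫⁻ z in S, edist (u z.1) (u z.2) ^ p ∂μ.prod μ ≤
      2 ^ (Module.finrank ℝ E + p) * ∫⁻ z in T, edist (u z.1) (u z.2) ^ p ∂μ.prod μ := by
  set G : E × E → ℝ≥0∞ := T.indicator fun z ↦ edist (u z.1) (u z.2) ^ p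
  have hG : Measurable G := (measurable_edist_comp_rpow hu p).indicator hT
  have hmid : Measurable fun z : E × E ↦ G (z.1, midpoint ℝ z.1 z.2) := by fun_prop
  have hpt : ∀ z ∈ S, edist (u z.1) (u z.2) ^ p ≤ 2 ^ (p - 1) *
      (G (z.1, midpoint ℝ z.1 z.2) + G (z.swap.1, midpoint ℝ z.swap.1 z.swap.2)) := by
    intro z hz
    simp only [G, Prod.fst_swap, Prod.snd_swap, midpoint_comm z.2 z.1,
      Set.indicator_of_mem (hST z hz).1, Set.indicator_of_mem (hST z hz).2]
    exact edist_rpow_le_two_rpow_mul_add hp _ _ _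
  calc ∫⁻ z in S, edist (u z.1) (u z.2) ^ p ∂μ.prod μ
      ≤ ∫⁻ z, 2 ^ (p - 1) * (G (z.1, midpoint ℝ z.1 z.2) +
          G (z.swap.1, midpoint ℝ z.swap.1 z.swap.2)) ∂μ.prod μ := by
        grw [← setLIntegral_le_lintegral S]
        exact setLIntegral_mono (by fun_prop) hpt
    _ = 2 ^ (p - 1) * (2 * (2 ^ Module.finrank ℝ E * ∫⁻ z, G z ∂μ.prod μ)) := by
        rw [lintegral_const_mul _ (by fun_prop), lintegral_add_left hmid,
          lintegral_prod_swap (μ := μ) (ν := μ) fun z ↦ G (z.1, midpoint ℝ z.1 z.2),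
          lintegral_prod_midpoint hG, two_mul]
    _ = 2 ^ (Module.finrank ℝ E + p) * ∫⁻ z in T, edist (u z.1) (u z.2) ^ p ∂μ.prod μ := by
        rw [lintegral_indicator hT, ← ENNReal.rpow_natCast, ← mul_assoc, ← mul_assoc]
        nth_rw 2 [← ENNReal.rpow_one 2]
        simp only [← ENNReal.rpow_add _ _ two_ne_zero ENNReal.ofNat_ne_top]
        ring_nf

lemma nearIncrementEnergy_le_two_rpow_mul (hp : 1 ≤ p) (hu : StronglyMeasurable u)
    (hBm : MeasurableSet B) (hB : Convex ℝ B) (ρ : ℝ≥0∞) :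
    nearIncrementEnergy μ p u B ρ ≤
      2 ^ (Module.finrank ℝ E + p) * nearIncrementEnergy μ p u B (ρ / 2) := by
  refine setLIntegral_edist_rpow_le_of_midpoint_mem hp hu
    ((measurableSet_edist_lt _).inter (hBm.prod hBm)) ?_
  rintro ⟨x, y⟩ ⟨hxy, hx, hy⟩
  have hm := hB.midpoint_mem hx hy
  have hlt : edist x y / 2 < ρ / 2 := ENNReal.div_lt_div_right two_ne_zero ENNReal.ofNat_ne_top hxy
  refine ⟨⟨?_, hx, hm⟩, ?_, hy, hm⟩
  · rwa [Set.mem_ofPred_eq, edist_left_midpoint_eq_div_two]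
  · rwa [Set.mem_ofPred_eq, midpoint_comm, edist_left_midpoint_eq_div_two, edist_comm]

lemma nearIncrementEnergy_le_pow_mul (hp : 1 ≤ p) (hu : StronglyMeasurable u)
    (hBm : MeasurableSet B) (hB : Convex ℝ B) (ρ : ℝ≥0∞) (k : ℕ) :
    nearIncrementEnergy μ p u B ρ ≤
      (2 ^ (Module.finrank ℝ E + p)) ^ k * nearIncrementEnergy μ p u B (ρ / 2 ^ k) := by
  induction k with
  | zero => simp
  | succ k ih =>
    grw [ih, nearIncrementEnergy_le_two_rpow_mul hp hu hBm hB, ← mul_assoc, ← pow_succ,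
      pow_succ 2 k]
    simp only [div_eq_mul_inv, mul_assoc, ENNReal.mul_inv (.inr (ENNReal.ofNat_ne_top (n := 2)))
      (.inr two_ne_zero), le_refl]

lemma nearIncrementEnergy_le_gagliardoEnergy (hp : 1 ≤ p) (ha : 1 ≤ a)
    (hap : a < Module.finrank ℝ E + p) (hu : StronglyMeasurable u)
    (hBm : MeasurableSet B) (hB : Convex ℝ B) {ρ : ℝ≥0∞} (hρ : ρ ≠ ⊤) :
    nearIncrementEnergy μ p u B ρ ≤
      ENNReal.ofReal (Module.finrank ℝ E + p - a) *
        (2 * ρ ^ a * gagliardoEnergy μ p a u B B) := by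
  set t : ℝ := Module.finrank ℝ E + p - a with ht
  have hθ : (2 : ℝ≥0∞) ^ (-t) < 1 :=
    ENNReal.rpow_lt_one_of_one_lt_of_neg ENNReal.one_lt_two (by linarith)
  have hθQ : (2 : ℝ≥0∞) ^ (-t) * 2 ^ (Module.finrank ℝ E + p) = 2 ^ a := by
    rw [← ENNReal.rpow_add _ _ two_ne_zero ENNReal.ofNat_ne_top, ht]
    ring_nf
  have hgeom : (1 - (2 : ℝ≥0∞) ^ (-t))⁻¹ * nearIncrementEnergy μ p u B ρ ≤
      2 * ρ ^ a * gagliardoEnergy μ p a u B B := by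
    rw [← ENNReal.tsum_geometric, ← ENNReal.tsum_mul_right]
    grw [← tsum_pow_mul_nearIncrementEnergy_le ha hu hρ]
    refine ENNReal.tsum_le_tsum fun k ↦ ?_
    grw [nearIncrementEnergy_le_pow_mul hp hu hBm hB ρ k, ← mul_assoc, ← mul_pow, hθQ]
  grw [← one_sub_two_rpow_neg_le t]
  exact (ENNReal.inv_mul_le_iff (tsub_pos_of_lt hθ).ne' (by finiteness)).1 hgeom

lemma setLIntegral_ball_edist_rpow_le_gagliardoEnergy_ball (hp : 1 ≤ p) (ha : 1 ≤ a)
    (hap : a < Module.finrank ℝ E + p) (hu : StronglyMeasurable u) (x₀ : E) (hr : 0 < r) :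
    ∫⁻ x in ball x₀ r, ∫⁻ y in ball x₀ r, edist (u x) (u y) ^ p ∂μ ∂μ ≤
      ENNReal.ofReal ((Module.finrank ℝ E + p - a) * r ^ a) *
        (2 ^ (1 + a) * gagliardoEnergy μ p a u (ball x₀ r) (ball x₀ r)) := by
  have hclose : {z : E × E | edist z.1 z.2 < ENNReal.ofReal (2 * r)} ∩ ball x₀ r ×ˢ ball x₀ r =
      ball x₀ r ×ˢ ball x₀ r := by
    refine Set.inter_eq_right.2 fun z hz ↦ ?_
    rw [Set.mem_ofPred_eq, edist_lt_ofReal, two_mul]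
    exact (dist_triangle_right _ _ x₀).trans_lt (add_lt_add hz.1 hz.2)
  calc ∫⁻ x in ball x₀ r, ∫⁻ y in ball x₀ r, edist (u x) (u y) ^ p ∂μ ∂μ
      = nearIncrementEnergy μ p u (ball x₀ r) (ENNReal.ofReal (2 * r)) := by
        rw [nearIncrementEnergy, hclose,
          setLIntegral_prod _ (measurable_edist_comp_rpow hu p).aemeasurable]
    _ ≤ ENNReal.ofReal (Module.finrank ℝ E + p - a) *
          (2 * ENNReal.ofReal (2 * r) ^ a * gagliardoEnergy μ p a u (ball x₀ r) (ball x₀ r)) :=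
        nearIncrementEnergy_le_gagliardoEnergy hp ha hap hu measurableSet_ball
          (convex_ball x₀ r) ENNReal.ofReal_ne_top
    _ = ENNReal.ofReal ((Module.finrank ℝ E + p - a) * r ^ a) *
          (2 ^ (1 + a) * gagliardoEnergy μ p a u (ball x₀ r) (ball x₀ r)) := by
        rw [ENNReal.ofReal_mul (sub_pos.2 hap).le, ENNReal.ofReal_mul two_pos.le,
          ENNReal.mul_rpow_of_nonneg _ _ (by linarith), ENNReal.ofReal_rpow_of_pos hr,
          ENNReal.ofReal_ofNat, ENNReal.rpow_add _ _ two_ne_zero ENNReal.ofNat_ne_top,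
          ENNReal.rpow_one]
        ring

end Midpoint

lemma measure_univ_mul_lintegral_edist_rpow_le {α Y : Type*} [MeasurableSpace α]
    [PseudoEMetricSpace Y] {p : ℝ} (hp : 1 ≤ p) {f : α → Y} (hf : StronglyMeasurable f)
    (ν κ : Measure α) [SFinite ν] [SFinite κ] :
    κ Set.univ * ∫⁻ x, ∫⁻ z, edist (f x) (f z) ^ p ∂ν ∂ν ≤
      2 ^ p * ν Set.univ * ∫⁻ x, ∫⁻ y, edist (f x) (f y) ^ p ∂κ ∂ν := by
  set H : α → ℝ≥0∞ := fun x ↦ ∫⁻ y, edist (f x) (f y) ^ p ∂κ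
  have hmeas := measurable_edist_comp_rpow hf p
  have hH : Measurable H := hmeas.lintegral_prod_right'
  have hsec (x : α) : Measurable fun y ↦ edist (f x) (f y) ^ p := hmeas.comp measurable_prodMk_left
  have hpt (x z : α) : κ Set.univ * edist (f x) (f z) ^ p ≤ 2 ^ (p - 1) * (H x + H z) := by
    calc κ Set.univ * edist (f x) (f z) ^ p = ∫⁻ _, edist (f x) (f z) ^ p ∂κ := by
          rw [lintegral_const, mul_comm]
      _ ≤ ∫⁻ y, 2 ^ (p - 1) * (edist (f x) (f y) ^ p + edist (f z) (f y) ^ p) ∂κ := by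
          gcongr with y
          exact edist_rpow_le_two_rpow_mul_add hp _ _ _
      _ = 2 ^ (p - 1) * (H x + H z) := by
          rw [lintegral_const_mul _ (by fun_prop), lintegral_add_left (hsec x)]
  calc κ Set.univ * ∫⁻ x, ∫⁻ z, edist (f x) (f z) ^ p ∂ν ∂ν
      = ∫⁻ x, ∫⁻ z, κ Set.univ * edist (f x) (f z) ^ p ∂ν ∂ν := by
        rw [← lintegral_const_mul _ hmeas.lintegral_prod_right']
        exact lintegral_congr fun x ↦ (lintegral_const_mul _ (hsec x)).symm
    _ ≤ ∫⁻ x, ∫⁻ z, 2 ^ (p - 1) * (H x + H z) ∂ν ∂ν :=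
        lintegral_mono fun x ↦ lintegral_mono (hpt x)
    _ = 2 ^ (p - 1) * 2 * ν Set.univ * ∫⁻ x, H x ∂ν := by
        simp_rw [lintegral_const_mul _ (hH.const_add _), lintegral_add_left measurable_const,
          lintegral_const]
        rw [lintegral_const_mul _ ((hH.mul_const _).add_const _),
          lintegral_add_left (hH.mul_const _), lintegral_mul_const _ hH, lintegral_const]
        ring
    _ = 2 ^ p * ν Set.univ * ∫⁻ x, H x ∂ν := by
        nth_rw 2 [← ENNReal.rpow_one 2]
        rw [← ENNReal.rpow_add _ _ two_ne_zero ENNReal.ofNat_ne_top, sub_add_cancel]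

section Exterior

variable {X Y : Type*} [PseudoMetricSpace X] [PseudoEMetricSpace Y] {p a r : ℝ}

lemma edist_rpow_neg_mul_edist_rpow_le (ha : 0 ≤ a) (u : X → Y) {x₀ x y : X}
    (hx : x ∈ ball x₀ r) (hy : y ∈ (closedBall x₀ r)ᶜ) :
    edist y x₀ ^ (-a) * edist (u x) (u y) ^ p ≤ 2 ^ a * gagliardoKernel p a u x y := by
  have hxy : edist x y ≤ 2 * edist y x₀ := by
    have hle : edist x x₀ ≤ edist y x₀ := by
      rw [mem_ball] at hx
      rw [Set.mem_compl_iff, mem_closedBall, not_le] at hy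
      simp only [edist_dist]
      exact ENNReal.ofReal_le_ofReal (hx.trans hy).le
    grw [edist_triangle_right x y x₀, hle, two_mul]
  calc edist y x₀ ^ (-a) * edist (u x) (u y) ^ p
      = 2 ^ a * ((2 * edist y x₀) ^ (-a) * edist (u x) (u y) ^ p) := by
        rw [ENNReal.mul_rpow_of_ne_top ENNReal.ofNat_ne_top (edist_ne_top _ _), ← mul_assoc,
          ← mul_assoc, ← ENNReal.rpow_add _ _ two_ne_zero ENNReal.ofNat_ne_top, add_neg_cancel,
          ENNReal.rpow_zero, one_mul]
    _ ≤ 2 ^ a * gagliardoKernel p a u x y := by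
        rw [gagliardoKernel, div_eq_mul_inv, mul_comm (edist _ _ ^ p), ENNReal.rpow_neg]
        gcongr

variable [MeasurableSpace X] [OpensMeasurableSpace X]

lemma setLIntegral_lintegral_withDensity_edist_rpow_neg_le (ha : 0 ≤ a)
    {u : X → Y} (hu : StronglyMeasurable u) (μ : Measure X) [SFinite μ] (x₀ : X) :
    ∫⁻ x in ball x₀ r, ∫⁻ y, edist (u x) (u y) ^ p
        ∂(μ.restrict (closedBall x₀ r)ᶜ).withDensity (edist · x₀ ^ (-a)) ∂μ ≤
      2 ^ a * gagliardoEnergy μ p a u (ball x₀ r) (closedBall x₀ r)ᶜ := by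
  have h2 : (2 : ℝ≥0∞) ^ a ≠ ⊤ := by finiteness
  have hsec (x : X) : Measurable fun y ↦ edist (u x) (u y) ^ p :=
    (measurable_edist_comp_rpow hu p).comp measurable_prodMk_left
  rw [gagliardoEnergy, ← lintegral_const_mul' _ _ h2]
  refine setLIntegral_mono' measurableSet_ball fun x hx ↦ ?_
  rw [← lintegral_const_mul' _ _ h2,
    lintegral_withDensity_eq_lintegral_mul _ (by fun_prop) (hsec x)]
  exact setLIntegral_mono' measurableSet_closedBall.compl fun y hy ↦
    edist_rpow_neg_mul_edist_rpow_le ha u hx hy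

end Exterior

lemma indicator_compl_closedBall_norm {E : Type*} [SeminormedAddCommGroup E] (f : ℝ → ℝ)
    (r : ℝ) :
    (closedBall (0 : E) r)ᶜ.indicator (f ‖·‖) = fun y ↦ (Set.Ioi r).indicator f ‖y‖ := by
  ext y
  simp [Set.indicator]

section Tail

variable {E : Type*} [NormedAddCommGroup E] [NormedSpace ℝ E] [FiniteDimensional ℝ E]
  [MeasurableSpace E] [BorelSpace E] [Nontrivial E] (μ : Measure E) [μ.IsAddHaarMeasure]
  {a r : ℝ}

lemma pow_smul_indicator_Ioi_rpow_neg_eqOn {n : ℕ} (hn : 1 ≤ n) (a r : ℝ) :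
    Set.EqOn (fun t : ℝ ↦ t ^ (n - 1) • (Set.Ioi r).indicator (· ^ (-a)) t)
      ((Set.Ioi r).indicator (· ^ (n - a - 1))) (Set.Ioi 0) := by
  intro t (ht : 0 < t)
  by_cases htr : t ∈ Set.Ioi r
  · simp only [Set.indicator_of_mem htr, smul_eq_mul]
    rw [← Real.rpow_natCast, ← Real.rpow_add ht, Nat.cast_pred hn]
    ring_nf
  · simp [htr]

lemma integrableOn_compl_closedBall_norm_rpow_neg (ha : Module.finrank ℝ E < a) (hr : 0 < r) :
    IntegrableOn (‖·‖ ^ (-a)) (closedBall (0 : E) r)ᶜ μ := by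
  have hlt : (Module.finrank ℝ E : ℝ) - a - 1 < -1 := by linarith
  rw [← integrable_indicator_iff measurableSet_closedBall.compl,
    indicator_compl_closedBall_norm (· ^ (-a)) r, integrable_fun_norm_addHaar,
    integrableOn_congr_fun (pow_smul_indicator_Ioi_rpow_neg_eqOn Module.finrank_pos a r)
      measurableSet_Ioi]
  exact ((integrableOn_Ioi_rpow_of_lt hlt hr).integrable_indicator measurableSet_Ioi).integrableOn

lemma setIntegral_compl_closedBall_norm_rpow_neg (ha : Module.finrank ℝ E < a) (hr : 0 < r) :
    ∫ y in (closedBall (0 : E) r)ᶜ, ‖y‖ ^ (-a) ∂μ =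
      Module.finrank ℝ E / (a - Module.finrank ℝ E) * r ^ (-a) *
        μ.real (closedBall 0 r) := by
  have hlt : (Module.finrank ℝ E : ℝ) - a - 1 < -1 := by linarith
  have hIoi : Set.Ioi (0 : ℝ) ∩ Set.Ioi r = Set.Ioi r :=
    Set.inter_eq_right.2 (Set.Ioi_subset_Ioi hr.le)
  rw [← integral_indicator measurableSet_closedBall.compl,
    indicator_compl_closedBall_norm (· ^ (-a)) r, integral_fun_norm_addHaar,
    setIntegral_congr_fun measurableSet_Ioi
      (pow_smul_indicator_Ioi_rpow_neg_eqOn Module.finrank_pos a r),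
    setIntegral_indicator measurableSet_Ioi, hIoi, integral_Ioi_rpow_of_lt hlt hr, sub_add_cancel,
    μ.addHaar_real_closedBall _ hr.le, ← Real.rpow_natCast r,
    sub_eq_add_neg _ a, Real.rpow_add hr, nsmul_eq_mul, smul_eq_mul]
  have : a - Module.finrank ℝ E ≠ 0 := by linarith
  have : (Module.finrank ℝ E : ℝ) + -a ≠ 0 := by linarith
  field_simp
  ring

lemma setLIntegral_compl_closedBall_edist_rpow_neg (ha : Module.finrank ℝ E < a) (x₀ : E)
    (hr : 0 < r) :
    ∫⁻ y in (closedBall x₀ r)ᶜ, edist y x₀ ^ (-a) ∂μ =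
      ENNReal.ofReal (Module.finrank ℝ E / (a - Module.finrank ℝ E) * r ^ (-a)) *
        μ (ball x₀ r) := by
  have htrans : (closedBall x₀ r)ᶜ.indicator (edist · x₀ ^ (-a)) =
      fun y ↦ (closedBall (0 : E) r)ᶜ.indicator (‖·‖ₑ ^ (-a)) (y - x₀) := by
    ext y
    simp [Set.indicator, edist_eq_enorm_sub, dist_eq_norm]
  have hofReal : ∀ y ∈ (closedBall (0 : E) r)ᶜ, ‖y‖ₑ ^ (-a) = ENNReal.ofReal (‖y‖ ^ (-a)) := by
    intro y hy
    rw [← ofReal_norm, ENNReal.ofReal_rpow_of_pos]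
    exact hr.trans (by simpa using hy)
  rw [← lintegral_indicator measurableSet_closedBall.compl, htrans,
    lintegral_sub_right_eq_self ((closedBall (0 : E) r)ᶜ.indicator (‖·‖ₑ ^ (-a))),
    lintegral_indicator measurableSet_closedBall.compl,
    setLIntegral_congr_fun measurableSet_closedBall.compl hofReal,
    ← ofReal_integral_eq_lintegral_ofReal (integrableOn_compl_closedBall_norm_rpow_neg μ ha hr)
      (.of_forall fun _ ↦ by positivity),
    setIntegral_compl_closedBall_norm_rpow_neg μ ha hr,
    ENNReal.ofReal_mul (by have := sub_pos.2 ha; positivity),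
    ofReal_measureReal measure_closedBall_lt_top.ne, ← μ.addHaar_closedBall_center x₀,
    μ.addHaar_closedBall_eq_addHaar_ball]

variable {F : Type*} [PseudoEMetricSpace F] {p : ℝ} {u : E → F}

lemma setLIntegral_ball_edist_rpow_le_gagliardoEnergy_compl (hp : 1 ≤ p)
    (ha : Module.finrank ℝ E < a) (hu : StronglyMeasurable u) (x₀ : E) (hr : 0 < r) :
    ∫⁻ x in ball x₀ r, ∫⁻ y in ball x₀ r, edist (u x) (u y) ^ p ∂μ ∂μ ≤
      ENNReal.ofReal ((a - Module.finrank ℝ E) / Module.finrank ℝ E * r ^ a) *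
        (2 ^ (p + a) * gagliardoEnergy μ p a u (ball x₀ r) (closedBall x₀ r)ᶜ) := by
  set N := Module.finrank ℝ E
  have hN : 0 < (N : ℝ) := Nat.cast_pos.2 Module.finrank_pos
  set B := ball x₀ r
  set κ : Measure E := (μ.restrict (closedBall x₀ r)ᶜ).withDensity (edist · x₀ ^ (-a))
  set c : ℝ := N / (a - N) * r ^ (-a)
  have hc : 0 < c := by have := sub_pos.2 ha; positivity
  have hcinv : c⁻¹ = (a - N) / N * r ^ a := by
    rw [mul_inv, inv_div, Real.rpow_neg hr.le, inv_inv]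
  have hκ : κ Set.univ = ENNReal.ofReal c * μ B := by
    rw [withDensity_apply _ .univ, Measure.restrict_univ,
      setLIntegral_compl_closedBall_edist_rpow_neg μ ha x₀ hr]
  have h := measure_univ_mul_lintegral_edist_rpow_le hp hu (μ.restrict B) κ
  grw [setLIntegral_lintegral_withDensity_edist_rpow_neg_le (hN.le.trans ha.le) hu, hκ,
    Measure.restrict_apply_univ, mul_comm _ (μ B), mul_assoc, mul_comm (2 ^ p), mul_assoc,
    ENNReal.mul_le_mul_iff_right (measure_ball_pos μ x₀ hr).ne' measure_ball_lt_top.ne,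
    ← mul_assoc (2 ^ p), ← ENNReal.rpow_add _ _ two_ne_zero ENNReal.ofNat_ne_top] at h
  rw [← hcinv, ENNReal.ofReal_inv_of_pos hc]
  rwa [← ENNReal.inv_mul_le_iff (by simp) (by simpa using hc), inv_inv]

end Tail

lemma measureReal_ball_pos {X : Type*} [PseudoMetricSpace X] [ProperSpace X] [MeasurableSpace X]
    (μ : Measure X) [μ.IsOpenPosMeasure] [IsFiniteMeasureOnCompacts μ] (x : X) {r : ℝ}
    (hr : 0 < r) : 0 < μ.real (ball x r) :=
  ENNReal.toReal_pos (measure_ball_pos μ x hr).ne' measure_ball_lt_top.ne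

section Combination

variable {E F : Type*} [NormedAddCommGroup E] [NormedSpace ℝ E] [FiniteDimensional ℝ E]
  [MeasurableSpace E] [BorelSpace E] [Nontrivial E] (μ : Measure E) [μ.IsAddHaarMeasure]
  {p s r : ℝ}

section Increments

variable [PseudoEMetricSpace F] {u : E → F}

lemma setLIntegral_ball_edist_rpow_le_mul_one_sub (hp : 1 ≤ p) (hs0 : 0 < s) (hs1 : s < 1)
    (hu : StronglyMeasurable u) (x₀ : E) (hr : 0 < r) :
    ∫⁻ x in ball x₀ r, ∫⁻ y in ball x₀ r, edist (u x) (u y) ^ p ∂μ ∂μ ≤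
      ENNReal.ofReal (p * (1 - s) * r ^ (Module.finrank ℝ E + s * p)) *
        (2 ^ (Module.finrank ℝ E + 2 * p) *
          gagliardoEnergy μ p (Module.finrank ℝ E + s * p) u (ball x₀ r) Set.univ) := by
  have hd : (1 : ℝ) ≤ Module.finrank ℝ E := Nat.one_le_cast.2 Module.finrank_pos
  have hsp : s * p < p := mul_lt_of_lt_one_left (by linarith) hs1
  have hexp : 1 + (Module.finrank ℝ E + s * p) ≤ Module.finrank ℝ E + 2 * p := by linarith
  grw [setLIntegral_ball_edist_rpow_le_gagliardoEnergy_ball hp (by nlinarith)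
      (add_lt_add_right hsp _) hu x₀ hr,
    ENNReal.rpow_le_rpow_of_exponent_le one_le_two hexp, Set.subset_univ (ball x₀ r),
    add_sub_add_left_eq_sub, ← one_sub_mul, mul_comm p]

lemma setLIntegral_ball_edist_rpow_le_mul (hp : 1 ≤ p) (hs0 : 0 < s) (hs1 : s < 1)
    (hu : StronglyMeasurable u) (x₀ : E) (hr : 0 < r) :
    ∫⁻ x in ball x₀ r, ∫⁻ y in ball x₀ r, edist (u x) (u y) ^ p ∂μ ∂μ ≤
      ENNReal.ofReal (p * s * r ^ (Module.finrank ℝ E + s * p)) *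
        (2 ^ (Module.finrank ℝ E + 2 * p) *
          gagliardoEnergy μ p (Module.finrank ℝ E + s * p) u (ball x₀ r) Set.univ) := by
  have hd : (1 : ℝ) ≤ Module.finrank ℝ E := Nat.one_le_cast.2 Module.finrank_pos
  have hsp : 0 < s * p := by positivity
  have hexp : p + (Module.finrank ℝ E + s * p) ≤ Module.finrank ℝ E + 2 * p := by nlinarith
  grw [setLIntegral_ball_edist_rpow_le_gagliardoEnergy_compl μ hp (lt_add_of_pos_right _ hsp) hu
      x₀ hr,
    ENNReal.rpow_le_rpow_of_exponent_le one_le_two hexp, Set.subset_univ (closedBall x₀ r)ᶜ,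
    add_sub_cancel_left, div_le_self hsp.le hd, mul_comm p s]

lemma setLIntegral_ball_edist_rpow_le_mul_mul_one_sub (hp : 1 ≤ p) (hs0 : 0 < s) (hs1 : s < 1)
    (hu : StronglyMeasurable u) (x₀ : E) (hr : 0 < r) :
    ∫⁻ x in ball x₀ r, ∫⁻ y in ball x₀ r, edist (u x) (u y) ^ p ∂μ ∂μ ≤
      ENNReal.ofReal (p * (2 * (s * (1 - s))) * r ^ (Module.finrank ℝ E + s * p)) *
        (2 ^ (Module.finrank ℝ E + 2 * p) *
          gagliardoEnergy μ p (Module.finrank ℝ E + s * p) u (ball x₀ r) Set.univ) := by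
  rcases le_total s (1 / 2) with hs | hs
  · grw [setLIntegral_ball_edist_rpow_le_mul μ hp hs0 hs1 hu x₀ hr]
    gcongr
    nlinarith
  · grw [setLIntegral_ball_edist_rpow_le_mul_one_sub μ hp hs0 hs1 hu x₀ hr]
    gcongr
    nlinarith

end Increments

variable [NormedAddCommGroup F] [NormedSpace ℝ F] [CompleteSpace F] {u : E → F}

lemma setLIntegral_ball_edist_setAverage_rpow_le_of_stronglyMeasurable (hp : 1 ≤ p) (hs0 : 0 < s)
    (hs1 : s < 1) (hu : StronglyMeasurable u) {x₀ : E} (hr : 0 < r)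
    (hint : IntegrableOn u (ball x₀ r) μ) :
    ∫⁻ x in ball x₀ r, edist (u x) (⨍ y in ball x₀ r, u y ∂μ) ^ p ∂μ ≤
      ENNReal.ofReal (2 ^ (Module.finrank ℝ E + 2 * p + 1) * p / μ.real (ball 0 1) *
        (s * (1 - s)) * r ^ (s * p)) *
          gagliardoEnergy μ p (Module.finrank ℝ E + s * p) u (ball x₀ r) Set.univ := by
  set d := Module.finrank ℝ E
  have hball := measureReal_ball_pos μ (0 : E) one_pos
  have hvol : μ (ball x₀ r) = ENNReal.ofReal (r ^ d * μ.real (ball 0 1)) := by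
    rw [μ.addHaar_ball x₀ hr.le, ENNReal.ofReal_mul (by positivity),
      ofReal_measureReal measure_ball_lt_top.ne]
  have hcoef : ENNReal.ofReal (p * (2 * (s * (1 - s))) * r ^ (d + s * p)) * 2 ^ (d + 2 * p) =
      μ (ball x₀ r) * ENNReal.ofReal (2 ^ (d + 2 * p + 1) * p / μ.real (ball 0 1) *
        (s * (1 - s)) * r ^ (s * p)) := by
    rw [hvol, ← ENNReal.ofReal_mul (by positivity), ← ENNReal.ofReal_ofNat 2,
      ENNReal.ofReal_rpow_of_pos two_pos, ← ENNReal.ofReal_mul' (by positivity),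
      Real.rpow_add hr, Real.rpow_natCast, Real.rpow_add_one two_ne_zero]
    congr 1
    field_simp
  have : IsFiniteMeasure (μ.restrict (ball x₀ r)) := ⟨by simpa using measure_ball_lt_top⟩
  have h := measure_univ_mul_lintegral_edist_average_rpow_le hp hint
  grw [setLIntegral_ball_edist_rpow_le_mul_mul_one_sub μ hp hs0 hs1 hu x₀ hr, ← mul_assoc, hcoef,
    Measure.restrict_apply_univ, mul_assoc, ENNReal.mul_le_mul_iff_right
      (measure_ball_pos μ x₀ hr).ne' measure_ball_lt_top.ne] at h
  exact h

lemma setLIntegral_ball_edist_setAverage_rpow_le (hp : 1 ≤ p) (hs0 : 0 < s) (hs1 : s < 1)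
    (hu : LocallyIntegrable u μ) (x₀ : E) (hr : 0 < r) :
    ∫⁻ x in ball x₀ r, edist (u x) (⨍ y in ball x₀ r, u y ∂μ) ^ p ∂μ ≤
      ENNReal.ofReal (2 ^ (Module.finrank ℝ E + 2 * p + 1) * p / μ.real (ball 0 1) *
        (s * (1 - s)) * r ^ (s * p)) *
          gagliardoEnergy μ p (Module.finrank ℝ E + s * p) u (ball x₀ r) Set.univ := by
  obtain ⟨v, hv, huv⟩ := hu.aestronglyMeasurable
  have huvB := ae_restrict_of_ae (s := ball x₀ r) huv
  have hint : IntegrableOn v (ball x₀ r) μ := Integrable.congr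
    ((hu.integrableOn_isCompact (isCompact_closedBall x₀ r)).mono_set ball_subset_closedBall) huvB
  have hlhs : ∫⁻ x in ball x₀ r, edist (u x) (⨍ y in ball x₀ r, u y ∂μ) ^ p ∂μ =
      ∫⁻ x in ball x₀ r, edist (v x) (⨍ y in ball x₀ r, v y ∂μ) ^ p ∂μ := by
    rw [average_congr huvB]
    exact lintegral_congr_ae (huvB.mono fun x hx ↦ by simp only [hx])
  rw [hlhs, gagliardoEnergy_congr_ae huv]
  exact setLIntegral_ball_edist_setAverage_rpow_le_of_stronglyMeasurable μ hp hs0 hs1 hv hr hint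

end Combination

section KernelBounds

variable {X Y : Type*} [PseudoMetricSpace X] [PseudoEMetricSpace Y] {p a : ℝ} {u : X → Y}

lemma gagliardoKernel_le_of_edist_le {D : ℝ≥0∞} (hp : 0 ≤ p) (x y : X)
    (hD : edist (u x) (u y) ≤ D) :
    gagliardoKernel p a u x y ≤ D ^ p * edist x y ^ (-a) := by
  grw [gagliardoKernel, hD, div_eq_mul_inv, ENNReal.rpow_neg]

lemma gagliardoKernel_le_of_lipschitzWith {L : NNReal} (hu : LipschitzWith L u) (hp : 0 < p)
    (x y : X) :
    gagliardoKernel p a u x y ≤ L ^ p * edist x y ^ (p - a) := by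
  grw [gagliardoKernel, hu x y]
  rw [ENNReal.mul_rpow_of_nonneg _ _ hp.le]
  rcases eq_or_ne (edist x y) 0 with h0 | h0
  · simp [h0, hp]
  · rw [mul_div_assoc, ENNReal.rpow_sub _ _ h0 (edist_ne_top x y)]

end KernelBounds

section FiniteEnergy

variable {E F : Type*} [NormedAddCommGroup E] [NormedSpace ℝ E] [FiniteDimensional ℝ E]
  [MeasurableSpace E] [BorelSpace E] [Nontrivial E] (μ : Measure E) [μ.IsAddHaarMeasure]
  {p a : ℝ}

lemma setLIntegral_ball_enorm_rpow_lt_top {c : ℝ} (hc : -c < Module.finrank ℝ E) (r : ℝ) :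
    ∫⁻ y in ball (0 : E) r, ‖y‖ₑ ^ c ∂μ < ⊤ := by
  have hint : IntegrableOn (fun y : E ↦ ‖y‖ ^ c) (ball 0 r) μ :=
    integrableOn_ball_of_norm_le_rpow (C := 1) Module.finrank_pos hc
      (.of_forall fun y ↦ by simp [abs_of_nonneg (Real.rpow_nonneg (norm_nonneg y) c)])
      (measurable_norm.pow_const c).aestronglyMeasurable
  refine (lintegral_congr_ae ?_).trans_lt hint.2
  filter_upwards [ae_restrict_of_ae (Measure.ae_ne μ 0)] with y hy
  rw [Real.enorm_of_nonneg (by positivity), ← ofReal_norm,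
    ENNReal.ofReal_rpow_of_pos (norm_pos_iff.2 hy)]

lemma setLIntegral_compl_closedBall_enorm_rpow_neg_lt_top (ha : Module.finrank ℝ E < a) {r : ℝ}
    (hr : 0 < r) : ∫⁻ y in (closedBall (0 : E) r)ᶜ, ‖y‖ₑ ^ (-a) ∂μ < ⊤ := by
  simp only [← edist_zero_right]
  rw [setLIntegral_compl_closedBall_edist_rpow_neg μ ha 0 hr]
  finiteness

variable [PseudoEMetricSpace F] {u : E → F}

lemma gagliardoEnergy_univ_ne_top {L : NNReal} {D : ℝ≥0∞} (hp : 0 < p) (ha : Module.finrank ℝ E < a)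
    (hap : a < Module.finrank ℝ E + p) (hu : LipschitzWith L u) (hD : D ≠ ⊤)
    (huD : ∀ x y, edist (u x) (u y) ≤ D) {A : Set E} (hA : μ A ≠ ⊤) :
    gagliardoEnergy μ p a u A Set.univ ≠ ⊤ := by
  set φ : E → ℝ≥0∞ := fun h ↦ min (L ^ p * ‖h‖ₑ ^ (p - a)) (D ^ p * ‖h‖ₑ ^ (-a))
  have hφ : ∫⁻ h, φ h ∂μ ≠ ⊤ := by
    have hball : ∫⁻ h in closedBall 0 1, φ h ∂μ < ⊤ := by
      grw [closedBall_subset_ball one_lt_two,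
        lintegral_mono fun h ↦ min_le_left _ _, lintegral_const_mul _ (by fun_prop)]
      exact ENNReal.mul_lt_top (by finiteness)
        (setLIntegral_ball_enorm_rpow_lt_top μ (by linarith) 2)
    have hcompl : ∫⁻ h in (closedBall 0 1)ᶜ, φ h ∂μ < ⊤ := by
      grw [lintegral_mono fun h ↦ min_le_right _ _, lintegral_const_mul _ (by fun_prop)]
      exact ENNReal.mul_lt_top (by finiteness)
        (setLIntegral_compl_closedBall_enorm_rpow_neg_lt_top μ ha one_pos)
    rw [← lintegral_add_compl φ measurableSet_closedBall]
    exact (ENNReal.add_lt_top.2 ⟨hball, hcompl⟩).ne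
  have hkernel (x : E) : ∫⁻ y in Set.univ, gagliardoKernel p a u x y ∂μ ≤ ∫⁻ h, φ h ∂μ := by
    rw [← lintegral_sub_right_eq_self φ x, Measure.restrict_univ]
    gcongr with y
    rw [le_min_iff, ← edist_eq_enorm_sub, edist_comm]
    exact ⟨gagliardoKernel_le_of_lipschitzWith hu hp x y,
      gagliardoKernel_le_of_edist_le hp.le x y (huD x y)⟩
  refine ne_top_of_le_ne_top (ENNReal.mul_ne_top hφ hA) ?_
  grw [gagliardoEnergy, ← setLIntegral_const]
  exact lintegral_mono hkernel

end FiniteEnergy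

section RealIntegrals

variable {X Y : Type*} [PseudoMetricSpace X] [PseudoMetricSpace Y] {p a : ℝ}

lemma toReal_gagliardoKernel (u : X → Y) (x y : X) :
    (gagliardoKernel p a u x y).toReal = dist (u x) (u y) ^ p / dist x y ^ a := by
  simp only [gagliardoKernel, ENNReal.toReal_div, ← ENNReal.toReal_rpow, dist_edist]

lemma toReal_lintegral_edist_rpow {α : Type*} [MeasurableSpace α] {μ : Measure α} {f : α → Y}
    (hp : 0 ≤ p) (hf : AEStronglyMeasurable f μ) (y : Y) :
    (∫⁻ x, edist (f x) y ^ p ∂μ).toReal = ∫ x, dist (f x) y ^ p ∂μ := by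
  rw [← integral_toReal ((hf.edist aestronglyMeasurable_const).pow_const p)
    (.of_forall fun x ↦ by finiteness)]
  simp only [← ENNReal.toReal_rpow, dist_edist]

lemma toReal_gagliardoEnergy [MeasurableSpace X] [OpensMeasurableSpace X]
    [SecondCountableTopology X] {μ : Measure X} [SFinite μ] {u : X → Y} (hu : StronglyMeasurable u)
    {A B : Set X} (h : gagliardoEnergy μ p a u A B ≠ ⊤) :
    (gagliardoEnergy μ p a u A B).toReal =
      ∫ x in A, ∫ y in B, dist (u x) (u y) ^ p / dist x y ^ a ∂μ ∂μ := by
  have hmeas := measurable_gagliardoKernel (p := p) (a := a) hu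
  have hinner : Measurable fun x ↦ ∫⁻ y in B, gagliardoKernel p a u x y ∂μ :=
    hmeas.lintegral_prod_right'
  have hfin := ae_lt_top hinner h
  rw [gagliardoEnergy, ← integral_toReal hinner.aemeasurable hfin]
  refine integral_congr_ae (hfin.mono fun x hx ↦ ?_)
  have hsec : Measurable (gagliardoKernel p a u x) := hmeas.comp measurable_prodMk_left
  simp only [← integral_toReal hsec.aemeasurable (ae_lt_top hsec hx.ne), toReal_gagliardoKernel]

end RealIntegrals

section CompactSupport

variable {E F : Type*} [NormedAddCommGroup E] [NormedSpace ℝ E] [FiniteDimensional ℝ E]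
  [MeasurableSpace E] [BorelSpace E] [Nontrivial E] {μ : Measure E} [μ.IsAddHaarMeasure]
  [NormedAddCommGroup F] [NormedSpace ℝ F] {p a : ℝ} {u : E → F} {A : Set E}

lemma gagliardoEnergy_univ_ne_top_of_contDiff (hp : 0 < p) (ha : Module.finrank ℝ E < a)
    (hap : a < Module.finrank ℝ E + p) (hu : ContDiff ℝ 1 u) (hc : HasCompactSupport u)
    (hA : μ A ≠ ⊤) :
    gagliardoEnergy μ p a u A Set.univ ≠ ⊤ := by
  obtain ⟨L, hL⟩ := ContDiff.lipschitzWith_of_hasCompactSupport hc hu one_ne_zero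
  have hbdd : Bornology.IsBounded (Set.range u) := (hc.isCompact_range hu.continuous).isBounded
  exact gagliardoEnergy_univ_ne_top μ hp ha hap hL hbdd.ediam_ne_top
    (fun x y ↦ edist_le_ediam_of_mem (Set.mem_range_self x) (Set.mem_range_self y)) hA

lemma integral_dist_rpow_le_mul_of_lintegral_edist_rpow_le (hp : 0 < p)
    (ha : Module.finrank ℝ E < a) (hap : a < Module.finrank ℝ E + p) (hu : ContDiff ℝ 1 u)
    (hc : HasCompactSupport u) (hA : μ A ≠ ⊤) {c : ℝ} (hc0 : 0 ≤ c) {m : F}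
    (h : ∫⁻ x in A, edist (u x) m ^ p ∂μ ≤
      ENNReal.ofReal c * gagliardoEnergy μ p a u A Set.univ) :
    ∫ x in A, dist (u x) m ^ p ∂μ ≤
      c * ∫ x in A, ∫ y, dist (u x) (u y) ^ p / dist x y ^ a ∂μ ∂μ := by
  have hmeas : StronglyMeasurable u := hu.continuous.stronglyMeasurable_of_hasCompactSupport hc
  have hfin := gagliardoEnergy_univ_ne_top_of_contDiff hp ha hap hu hc hA
  have hle := ENNReal.toReal_mono (ENNReal.mul_ne_top ENNReal.ofReal_ne_top hfin) h
  rwa [toReal_lintegral_edist_rpow hp.le hmeas.aestronglyMeasurable, ENNReal.toReal_mul,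
    ENNReal.toReal_ofReal hc0, toReal_gagliardoEnergy hmeas hfin, Measure.restrict_univ] at hle

end CompactSupport

theorem stmt14_general {E F : Type*} [NormedAddCommGroup E] [NormedSpace ℝ E]
    [FiniteDimensional ℝ E] [Nontrivial E] [MeasurableSpace E] [BorelSpace E] (μ : Measure E)
    [μ.IsAddHaarMeasure] [NormedAddCommGroup F] [NormedSpace ℝ F] [CompleteSpace F] {p : ℝ}
    (hp : 1 ≤ p) :
    ∃ W > 0, ∀ s : ℝ, 0 < s → s < 1 → ∀ (x₀ : E) (r : ℝ), 0 < r →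
      ∀ u : E → F, LocallyIntegrable u μ →
        ∫⁻ x in ball x₀ r, edist (u x) (⨍ y in ball x₀ r, u y ∂μ) ^ p ∂μ ≤
          ENNReal.ofReal (W * (s * (1 - s)) * r ^ (s * p)) *
            gagliardoEnergy μ p (Module.finrank ℝ E + s * p) u (ball x₀ r) Set.univ := by
  have hball := measureReal_ball_pos μ (0 : E) one_pos
  exact ⟨2 ^ (Module.finrank ℝ E + 2 * p + 1) * p / μ.real (ball 0 1), by positivity,
    fun s hs0 hs1 x₀ r hr u hu ↦
      setLIntegral_ball_edist_setAverage_rpow_le μ hp hs0 hs1 hu x₀ hr⟩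

lemma exists_integral_dist_setAverage_rpow_le_of_hasCompactSupport {E F : Type*}
    [NormedAddCommGroup E] [NormedSpace ℝ E] [FiniteDimensional ℝ E] [Nontrivial E]
    [MeasurableSpace E] [BorelSpace E] (μ : Measure E) [μ.IsAddHaarMeasure]
    [NormedAddCommGroup F] [NormedSpace ℝ F] [CompleteSpace F] {p : ℝ} (hp : 1 ≤ p) :
    ∃ W > 0, ∀ s : ℝ, 0 < s → s < 1 → ∀ (x₀ : E) (r : ℝ), 0 < r →
      ∀ u : E → F, ContDiff ℝ 1 u → HasCompactSupport u →
        ∫ x in ball x₀ r, dist (u x) (⨍ y in ball x₀ r, u y ∂μ) ^ p ∂μ ≤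
          W * (s * (1 - s)) * r ^ (s * p) *
            ∫ x in ball x₀ r, ∫ y,
              dist (u x) (u y) ^ p / dist x y ^ (Module.finrank ℝ E + s * p) ∂μ ∂μ := by
  obtain ⟨W, hW, h⟩ := stmt14_general (F := F) μ hp
  refine ⟨W, hW, fun s hs0 hs1 x₀ r hr u hu hc ↦ ?_⟩
  have hint := (hu.continuous.integrable_of_hasCompactSupport hc (μ := μ)).locallyIntegrable
  have hsp0 : 0 < s * p := by positivity
  have hsp1 : s * p < p := mul_lt_of_lt_one_left (by linarith) hs1
  have := sub_pos.2 hs1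
  exact integral_dist_rpow_le_mul_of_lintegral_edist_rpow_le (by linarith) (by linarith)
    (by linarith) hu hc measure_ball_lt_top.ne (by positivity) (h s hs0 hs1 x₀ r hr u hint)

theorem stmt14 (N : ℕ) (hN : 0 < N) (p : ℝ) (hp : 1 ≤ p) :
    ∃ W > 0, ∀ s : ℝ, 0 < s → s < 1 → ∀ (x0 : Euc N) (r : ℝ), 0 < r →
      ∀ u : Euc N → ℝ, TestOn (Set.univ : Set (Euc N)) u →
        (∫ x in ball x0 r,
            |u x - (volume (ball x0 r)).toReal⁻¹ * ∫ y in ball x0 r, u y| ^ p) ≤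
          W * (s * (1 - s)) * r ^ (s * p) *
            ∫ x in ball x0 r, ∫ y, |u x - u y| ^ p / ‖x - y‖ ^ ((N : ℝ) + s * p) := by
  have : Nonempty (Fin N) := Fin.pos_iff_nonempty.1 hN
  obtain ⟨W, hW, h⟩ :=
    exists_integral_dist_setAverage_rpow_le_of_hasCompactSupport (F := ℝ)
      (volume : Measure (Euc N)) hp
  refine ⟨W, hW, fun s hs0 hs1 x0 r hr u ⟨hu, hc, _⟩ ↦ ?_⟩
  simpa [Real.dist_eq, dist_eq_norm, setAverage_eq, measureReal_def] using
    h s hs0 hs1 x0 r hr u (hu.of_le (by simp)) hc
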